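/- Let S = K[x_1,...,x_n], Q = (x_1,...,x_t), and Q' = (x_{r+1},...,x_n), where 1 ≤ r ≤ t < n. Then sdepth_S(Q ∩ Q') ≥ ⌈r/2⌉ + ⌈(n−t)/2⌉. -/

import Mathlib

open MvPolynomial

/-- The depth of a module `M` with respect to an ideal `I`: the supremum of
lengths of `M`-regular sequences with entries in `I`. -/
noncomputable def moduleDepth (R : Type*) [CommRing R] (I : Ideal R)
    (M : Type*) [AddCommGroup M] [Module R M] : ℕ :=
  sSup {k | ∃ rs : List R, rs.length = k ∧ (∀ r ∈ rs, r ∈ I) ∧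
    RingTheory.Sequence.IsRegular M rs}

/-- The Stanley space `u·K[Z]`: the `K`-span of all monomials `u·v` with
`v` a monomial in the variables of `Z`. -/
noncomputable def stanleySpace {n : ℕ} (K : Type*) [Field K] (d : Fin n →₀ ℕ)
    (Z : Finset (Fin n)) : Submodule K (MvPolynomial (Fin n) K) :=
  Submodule.span K {f | ∃ e : Fin n →₀ ℕ, (∀ i, e i ≠ 0 → i ∈ Z) ∧
    f = monomial (d + e) (1 : K)}

/-- A Stanley decomposition of a monomial ideal `I`: a finite family of Stanley
spaces `uᵢ·K[Zᵢ]`, with each `uᵢ ∈ I`, which are independent and whose (direct)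
sum is `I` as a `K`-vector space. -/
structure StanleyDecomp {n : ℕ} (K : Type*) [Field K]
    (I : Ideal (MvPolynomial (Fin n) K)) where
  m : ℕ
  u : Fin m → (Fin n →₀ ℕ)
  Z : Fin m → Finset (Fin n)
  mem : ∀ i, monomial (u i) (1 : K) ∈ I
  indep : iSupIndep fun i => stanleySpace K (u i) (Z i)
  total : (⨆ i, stanleySpace K (u i) (Z i)) = Submodule.restrictScalars K I

/-- The Stanley depth of a monomial ideal: the largest `k` such that `I` admits a
Stanley decomposition all of whose Stanley spaces use at least `k` variables. -/
noncomputable def sdepth {n : ℕ} {K : Type*} [Field K]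
    (I : Ideal (MvPolynomial (Fin n) K)) : ℕ :=
  sSup {k | ∃ D : StanleyDecomp K I, ∀ i, k ≤ (D.Z i).card}

/-- `I` is a monomial ideal if it is generated by monomials. -/
def IsMonomialIdeal {n : ℕ} {K : Type*} [Field K]
    (I : Ideal (MvPolynomial (Fin n) K)) : Prop :=
  ∃ G : Set (Fin n →₀ ℕ), I = Ideal.span ((fun d => monomial d (1 : K)) '' G)

/-- The monomial prime ideal generated by the variables in `A`. -/
noncomputable def varIdeal {n : ℕ} (K : Type*) [Field K] (A : Finset (Fin n)) :
    Ideal (MvPolynomial (Fin n) K) :=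
  Ideal.span ((fun i => (X i : MvPolynomial (Fin n) K)) '' ↑A)

/-- The graded maximal ideal `(x_1, …, x_n)`. -/
noncomputable def maxIdeal (n : ℕ) (K : Type*) [Field K] :
    Ideal (MvPolynomial (Fin n) K) :=
  varIdeal K Finset.univ

/-! A monomial lies in a monomial prime iff its support meets the set of generating variables, so
a partition into intervals `[A, B]` of the sets meeting both generating sets yields a Stanley
decomposition of the intersection into the spaces `x_A K[B]`. A set meeting both either meets their
common part `M`, or avoids `M` and meets both differences. Interval partitions pass to intersections
and disjoint unions of families, hence it suffices to partition the sets meeting a given `V` into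
intervals whose tops miss at most half of `V`.

For this, place `V` injectively on a cycle of odd length `m`, and send a nonempty subset `W` of the
cycle to the set `Y` of points whose backward distance to `W` is even. A point is in `Y` iff it is
in `W` or its predecessor is not in `Y`. Consequently `Y ∪ (Y + 1)` is the whole cycle, the sets
`W'` with `Y ∩ (Y + 1) ⊆ W' ⊆ Y` are exactly those which yield the same `Y`, and
`2|Y| = m + |Y ∩ (Y + 1)|`: thus `Y` misses at most half of the cycle, and `Y ∩ (Y + 1)` is nonempty
because `m` is odd. -/

open Finset

/-- A partition of the family `F` of elements of a preorder into order intervals, encoded by the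
functions sending a member of `F` to the bottom and to the top of the interval containing it. The
values of `lo` and `hi` outside `F` are irrelevant. -/
structure IntervalPartition {P : Type*} [Preorder P] (F : Set P) where
  lo : P → P
  hi : P → P
  lo_le {a : P} : a ∈ F → lo a ≤ a
  le_hi {a : P} : a ∈ F → a ≤ hi a
  mem_of_le {a b : P} : a ∈ F → lo a ≤ b → b ≤ hi a → b ∈ F
  lo_eq {a b : P} : a ∈ F → lo a ≤ b → b ≤ hi a → lo b = lo a
  hi_eq {a b : P} : a ∈ F → lo a ≤ b → b ≤ hi a → hi b = hi a

namespace IntervalPartition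

section Preorder

variable {P Q : Type*} [Preorder P] [Preorder Q] {F G : Set P}

theorem lo_mem (p : IntervalPartition F) {a : P} (ha : a ∈ F) : p.lo a ∈ F :=
  p.mem_of_le ha le_rfl ((p.lo_le ha).trans (p.le_hi ha))

theorem lo_lo (p : IntervalPartition F) {a : P} (ha : a ∈ F) : p.lo (p.lo a) = p.lo a :=
  p.lo_eq ha le_rfl ((p.lo_le ha).trans (p.le_hi ha))

theorem hi_lo (p : IntervalPartition F) {a : P} (ha : a ∈ F) : p.hi (p.lo a) = p.hi a :=
  p.hi_eq ha le_rfl ((p.lo_le ha).trans (p.le_hi ha))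

/-- The bottoms of the intervals of `p`. They serve as an index set for these intervals. -/
def bottoms (p : IntervalPartition F) : Set P := {a ∈ F | p.lo a = a}

theorem lo_mem_bottoms (p : IntervalPartition F) {a : P} (ha : a ∈ F) : p.lo a ∈ p.bottoms :=
  ⟨p.lo_mem ha, p.lo_lo ha⟩

theorem lo_eq_of_mem_Icc (p : IntervalPartition F) {a b : P} (ha : a ∈ p.bottoms)
    (hb : b ∈ Set.Icc a (p.hi a)) : p.lo b = a :=
  (p.lo_eq ha.1 (ha.2.trans_le hb.1) hb.2).trans ha.2

theorem pairwise_disjoint_Icc (p : IntervalPartition F) :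
    Pairwise fun a b : p.bottoms ↦
      Disjoint (Set.Icc (a : P) (p.hi a)) (Set.Icc (b : P) (p.hi b)) := fun a b hab ↦
  Set.disjoint_left.2 fun _ hca hcb ↦ hab <| Subtype.ext <|
    (p.lo_eq_of_mem_Icc a.2 hca).symm.trans (p.lo_eq_of_mem_Icc b.2 hcb)

theorem iUnion_Icc (p : IntervalPartition F) :
    ⋃ a : p.bottoms, Set.Icc (a : P) (p.hi a) = F := by
  refine Set.Subset.antisymm (Set.iUnion_subset fun a b hb ↦ ?_) fun b hb ↦ ?_
  · exact p.mem_of_le a.2.1 (a.2.2.trans_le hb.1) hb.2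
  · exact Set.mem_iUnion.2 ⟨⟨p.lo b, p.lo_mem_bottoms hb⟩, p.lo_le hb,
      (p.hi_lo hb).symm ▸ p.le_hi hb⟩

/-- The single interval `[⊥, c]`, as a partition of the lower set of `c`. -/
def ofIic [OrderBot P] (c : P) : IntervalPartition (Set.Iic c) where
  lo _ := ⊥
  hi _ := c
  lo_le _ := bot_le
  le_hi ha := ha
  mem_of_le _ _ hb := hb
  lo_eq _ _ _ := rfl
  hi_eq _ _ _ := rfl

open Classical in
/-- The partition of a disjoint union of two families given by partitions of both. -/
noncomputable def disjUnion (p : IntervalPartition F) (q : IntervalPartition G)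
    (h : Disjoint F G) : IntervalPartition (F ∪ G) where
  lo a := if a ∈ F then p.lo a else q.lo a
  hi a := if a ∈ F then p.hi a else q.hi a
  lo_le {a} ha := by
    split_ifs with haF
    exacts [p.lo_le haF, q.lo_le (ha.resolve_left haF)]
  le_hi {a} ha := by
    split_ifs with haF
    exacts [p.le_hi haF, q.le_hi (ha.resolve_left haF)]
  mem_of_le {a b} ha hlo hhi := by
    split_ifs at hlo hhi with haF
    exacts [.inl (p.mem_of_le haF hlo hhi), .inr (q.mem_of_le (ha.resolve_left haF) hlo hhi)]
  lo_eq {a b} ha hlo hhi := by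
    split_ifs at hlo hhi with haF
    · rw [if_pos (p.mem_of_le haF hlo hhi), if_pos haF, p.lo_eq haF hlo hhi]
    · have haG := ha.resolve_left haF
      rw [if_neg (h.notMem_of_mem_right (q.mem_of_le haG hlo hhi)), if_neg haF,
        q.lo_eq haG hlo hhi]
  hi_eq {a b} ha hlo hhi := by
    split_ifs at hlo hhi with haF
    · rw [if_pos (p.mem_of_le haF hlo hhi), if_pos haF, p.hi_eq haF hlo hhi]
    · have haG := ha.resolve_left haF
      rw [if_neg (h.notMem_of_mem_right (q.mem_of_le haG hlo hhi)), if_neg haF,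
        q.hi_eq haG hlo hhi]

/-- The preimage of an interval partition under a map `g` with upper adjoint `u`. Only elements
below the range of `g` occur as bottoms, hence `l` need be a lower adjoint there only. -/
def comap (p : IntervalPartition F) (g : Q → P) (l u : P → Q)
    (hl : ∀ ⦃a b t⦄, t ≤ g a → (l t ≤ b ↔ t ≤ g b)) (hu : GaloisConnection g u) :
    IntervalPartition (g ⁻¹' F) where
  lo a := l (p.lo (g a))
  hi a := u (p.hi (g a))
  lo_le ha := (hl (p.lo_le ha)).2 (p.lo_le ha)
  le_hi ha := hu.le_u (p.le_hi ha)
  mem_of_le ha hlo hhi := p.mem_of_le ha ((hl (p.lo_le ha)).1 hlo) (hu.l_le hhi)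
  lo_eq ha hlo hhi := congrArg l (p.lo_eq ha ((hl (p.lo_le ha)).1 hlo) (hu.l_le hhi))
  hi_eq ha hlo hhi := congrArg u (p.hi_eq ha ((hl (p.lo_le ha)).1 hlo) (hu.l_le hhi))

end Preorder

/-- The common refinement of partitions of two families, as a partition of their intersection. -/
def inter {P : Type*} [Lattice P] {F G : Set P} (p : IntervalPartition F)
    (q : IntervalPartition G) : IntervalPartition (F ∩ G) where
  lo a := p.lo a ⊔ q.lo a
  hi a := p.hi a ⊓ q.hi a
  lo_le ha := sup_le (p.lo_le ha.1) (q.lo_le ha.2)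
  le_hi ha := le_inf (p.le_hi ha.1) (q.le_hi ha.2)
  mem_of_le ha hlo hhi :=
    ⟨p.mem_of_le ha.1 (le_sup_left.trans hlo) (hhi.trans inf_le_left),
      q.mem_of_le ha.2 (le_sup_right.trans hlo) (hhi.trans inf_le_right)⟩
  lo_eq ha hlo hhi :=
    congrArg₂ _ (p.lo_eq ha.1 (le_sup_left.trans hlo) (hhi.trans inf_le_left))
      (q.lo_eq ha.2 (le_sup_right.trans hlo) (hhi.trans inf_le_right))
  hi_eq ha hlo hhi :=
    congrArg₂ _ (p.hi_eq ha.1 (le_sup_left.trans hlo) (hhi.trans inf_le_left))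
      (q.hi_eq ha.2 (le_sup_right.trans hlo) (hhi.trans inf_le_right))

end IntervalPartition

section Cycle

variable {m : ℕ} {W Y : Finset (ZMod m)} {y : ZMod m}

/-- The number of backward steps from `y` to the nearest element of `W` on the cycle `ZMod m`. It
has the junk value `0` if `W` is empty. -/
noncomputable def backwardDist (W : Finset (ZMod m)) (y : ZMod m) : ℕ :=
  sInf {j : ℕ | y - j ∈ W}

theorem backwardDist_of_mem (hy : y ∈ W) : backwardDist W y = 0 :=
  Nat.sInf_eq_zero.2 <| .inl <| by simpa using hy

variable [NeZero m]

theorem backwardDist_of_notMem (hW : W.Nonempty) (hy : y ∉ W) :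
    backwardDist W y = backwardDist W (y - 1) + 1 := by
  obtain ⟨w, hw⟩ := hW
  have hne : {j : ℕ | y - j ∈ W}.Nonempty := ⟨(y - w).val, by simpa using hw⟩
  have hpos : 1 ≤ sInf {j : ℕ | y - j ∈ W} :=
    Nat.one_le_iff_ne_zero.2 fun h ↦ hy <| by simpa [h] using Nat.sInf_mem hne
  rw [backwardDist, ← Nat.sInf_add hpos, backwardDist]
  simp only [Nat.cast_add, Nat.cast_one, sub_sub, add_comm]

/-- The points of the cycle `ZMod m` at even backward distance from `W`; for nonempty `W` this is
the top of the interval containing `W`. -/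
noncomputable def evenDistSet (W : Finset (ZMod m)) : Finset (ZMod m) :=
  {y | Even (backwardDist W y)}

theorem mem_evenDistSet : y ∈ evenDistSet W ↔ Even (backwardDist W y) := by
  simp [evenDistSet]

theorem mem_evenDistSet_iff (hW : W.Nonempty) :
    y ∈ evenDistSet W ↔ y ∈ W ∨ y - 1 ∉ evenDistSet W := by
  by_cases hy : y ∈ W
  · simp [mem_evenDistSet, backwardDist_of_mem hy, hy]
  · simp [mem_evenDistSet, backwardDist_of_notMem hW hy, hy, Nat.even_add_one]

theorem subset_evenDistSet : W ⊆ evenDistSet W := fun _ hy ↦ by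
  simp [mem_evenDistSet, backwardDist_of_mem hy]

theorem eq_evenDistSet (hW : W.Nonempty) (hY : ∀ y, y ∈ Y ↔ y ∈ W ∨ y - 1 ∉ Y) :
    Y = evenDistSet W := by
  suffices h : ∀ d y, backwardDist W y = d → (y ∈ Y ↔ y ∈ evenDistSet W) from
    Finset.ext fun y ↦ h _ y rfl
  intro d
  induction d with
  | zero =>
    intro y hd
    have hy : y ∈ W := by
      by_contra hy
      simp [backwardDist_of_notMem hW hy] at hd
    simp only [hY y, mem_evenDistSet.2 (hd ▸ Even.zero), hy, true_or]
  | succ d ih =>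
    intro y hd
    have hy : y ∉ W := fun hy ↦ by simp [backwardDist_of_mem hy] at hd
    rw [backwardDist_of_notMem hW hy, Nat.add_right_cancel_iff] at hd
    rw [hY y, mem_evenDistSet_iff hW, ih _ hd]

/-- The points of `evenDistSet W` whose predecessor lies in it as well; for nonempty `W` this is the
bottom of the interval containing `W`. -/
noncomputable def evenDistCore (W : Finset (ZMod m)) : Finset (ZMod m) :=
  {y ∈ evenDistSet W | y - 1 ∈ evenDistSet W}

theorem mem_evenDistCore :
    y ∈ evenDistCore W ↔ y ∈ evenDistSet W ∧ y - 1 ∈ evenDistSet W := by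
  simp [evenDistCore]

theorem evenDistCore_subset (hW : W.Nonempty) : evenDistCore W ⊆ W := fun y hy ↦ by
  rw [mem_evenDistCore] at hy
  exact ((mem_evenDistSet_iff hW).1 hy.1).resolve_right (not_not.2 hy.2)

theorem two_mul_card_evenDistSet (hW : W.Nonempty) :
    2 * #(evenDistSet W) = m + #(evenDistCore W) := by
  let shift := (evenDistSet W).map (Equiv.addRight (1 : ZMod m)).toEmbedding
  have mem_shift (y : ZMod m) : y ∈ shift ↔ y - 1 ∈ evenDistSet W := by
    simp [shift, mem_map_equiv, sub_eq_add_neg]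
  have union_eq : evenDistSet W ∪ shift = univ := by
    ext y
    simpa [mem_shift] using Classical.or_iff_not_imp_right.2 fun h ↦
      (mem_evenDistSet_iff hW).2 (.inr h)
  have inter_eq : evenDistSet W ∩ shift = evenDistCore W := by
    ext y
    rw [mem_inter, mem_shift, mem_evenDistCore]
  have h := card_union_add_card_inter (evenDistSet W) shift
  rw [union_eq, inter_eq, card_univ, ZMod.card, card_map] at h
  rw [h, two_mul]

theorem evenDistCore_nonempty (hm : Odd m) (hW : W.Nonempty) : (evenDistCore W).Nonempty := by
  rw [← card_pos]
  have := two_mul_card_evenDistSet hW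
  grind

theorem card_compl_evenDistSet_le (hW : W.Nonempty) : #(evenDistSet W)ᶜ ≤ m / 2 := by
  have := two_mul_card_evenDistSet hW
  rw [card_compl, ZMod.card]
  lia

theorem evenDistSet_eq_of_subset (hW : W.Nonempty) {V : Finset (ZMod m)} (hV : V.Nonempty)
    (hlo : evenDistCore W ⊆ V) (hhi : V ⊆ evenDistSet W) : evenDistSet V = evenDistSet W := by
  refine (eq_evenDistSet hV fun y ↦ ⟨fun hy ↦ ?_, ?_⟩).symm
  · by_cases hpred : y - 1 ∈ evenDistSet W
    exacts [.inl (hlo (mem_evenDistCore.2 ⟨hy, hpred⟩)), .inr hpred]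
  · rintro (hy | hpred)
    exacts [hhi hy, (mem_evenDistSet_iff hW).2 (.inr hpred)]

/-- The partition of the nonempty subsets of an odd cycle by the value of `evenDistSet`. -/
noncomputable def IntervalPartition.oddCycle (hm : Odd m) :
    IntervalPartition {W : Finset (ZMod m) | W.Nonempty} where
  lo := evenDistCore
  hi := evenDistSet
  lo_le := evenDistCore_subset
  le_hi _ := subset_evenDistSet
  mem_of_le hW hlo _ := (evenDistCore_nonempty hm hW).mono hlo
  lo_eq hW hlo hhi := by
    have hV := (evenDistCore_nonempty hm hW).mono hlo
    simp only [evenDistCore, evenDistSet_eq_of_subset hW hV hlo hhi]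
  hi_eq hW hlo hhi :=
    evenDistSet_eq_of_subset hW ((evenDistCore_nonempty hm hW).mono hlo) hlo hhi

end Cycle

section Meeting

variable {α β : Type*} [DecidableEq α]

/-- The family of finite sets meeting `A`; it consists of the supports of the monomials in the
prime ideal generated by the variables in `A`. -/
def meeting (A : Finset α) : Set (Finset α) := {W | (W ∩ A).Nonempty}

theorem mem_meeting {A W : Finset α} : W ∈ meeting A ↔ (W ∩ A).Nonempty := Iff.rfl

variable [Fintype α]

theorem meeting_inter_meeting (A B : Finset α) :
    meeting A ∩ meeting B =
      meeting (A ∩ B) ∪ Set.Iic (A ∩ B)ᶜ ∩ (meeting (A \ B) ∩ meeting (B \ A)) := by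
  ext W
  simp only [meeting, Finset.Nonempty, Set.mem_inter_iff, Set.mem_union, Set.mem_ofPred_eq,
    Set.mem_Iic, subset_iff, mem_inter, mem_compl, mem_sdiff]
  grind

/-- The preimage of an interval partition of sets under the map sending `W` to the image of `W ∩ A`,
for `f` injective on `A`. -/
def IntervalPartition.comapImageInter [DecidableEq β] {F : Set (Finset β)}
    (p : IntervalPartition F) {A : Finset α} {f : α → β} (hf : Set.InjOn f A) :
    IntervalPartition ((fun W : Finset α ↦ (W ∩ A).image f) ⁻¹' F) :=
  p.comap _ (fun T ↦ {x ∈ A | f x ∈ T}) (fun T ↦ univ.filter fun x ↦ x ∈ A → f x ∈ T)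
    (fun V W T hT ↦ by
      have hT' (y) (hy : y ∈ T) : ∃ x ∈ A, f x = y := by
        obtain ⟨x, hx, rfl⟩ := mem_image.1 (hT hy)
        exact ⟨x, (mem_inter.1 hx).2, rfl⟩
      simp only [subset_iff, mem_filter, mem_image, mem_inter]
      constructor
      · intro h y hy
        obtain ⟨x, hx, rfl⟩ := hT' y hy
        exact ⟨x, ⟨h ⟨hx, hy⟩, hx⟩, rfl⟩
      · rintro h x ⟨hx, hxT⟩
        obtain ⟨x', ⟨hx'W, hx'A⟩, hfx⟩ := h hxT
        rwa [← hf hx'A hx hfx])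
    (fun W T ↦ by
      simp only [subset_iff, mem_filter_univ, forall_mem_image, mem_inter, and_imp])

theorem exists_intervalPartition_meeting (A : Finset α) :
    ∃ p : IntervalPartition (meeting A), ∀ W ∈ meeting A, #(p.hi W)ᶜ ≤ #A / 2 := by
  let m := 2 * (#A / 2) + 1
  have hm : Odd m := odd_two_mul_add_one _
  obtain ⟨f, -, hf⟩ : ∃ f : α → ZMod m, (A : Set α) ⊆ f ⁻¹' Set.univ ∧ Set.InjOn f A := by
    refine A.finite_toSet.exists_injOn_of_encard_le ?_
    rw [Set.encard_coe_eq_coe_finsetCard, Set.encard_univ, ENat.card_eq_coe_fintype_card,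
      ZMod.card, Nat.cast_le]
    lia
  have hF : meeting A = (fun W ↦ (W ∩ A).image f) ⁻¹' {W | W.Nonempty} := by
    ext W
    exact image_nonempty.symm
  rw [hF]
  refine ⟨(IntervalPartition.oddCycle hm).comapImageInter hf, fun W hW ↦ ?_⟩
  set Y := evenDistSet ((W ∩ A).image f)
  change #(univ.filter fun x ↦ x ∈ A → f x ∈ Y)ᶜ ≤ #A / 2
  calc #(univ.filter fun x ↦ x ∈ A → f x ∈ Y)ᶜ
      = #{x ∈ A | f x ∉ Y} := by congr 1; ext x; simp
    _ ≤ #Yᶜ :=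
        card_le_card_of_injOn f (by simp [Set.MapsTo]) (hf.mono (coe_subset.2 (filter_subset _ _)))
    _ ≤ m / 2 := card_compl_evenDistSet_le hW
    _ = #A / 2 := by lia

theorem exists_intervalPartition_meeting_inter (A B : Finset α) :
    ∃ p : IntervalPartition (meeting A ∩ meeting B), ∀ W ∈ meeting A ∩ meeting B,
      #(p.hi W)ᶜ ≤ #(A ∩ B) + #(A \ B) / 2 + #(B \ A) / 2 := by
  obtain ⟨p, hp⟩ := exists_intervalPartition_meeting (A ∩ B)
  obtain ⟨q, hq⟩ := exists_intervalPartition_meeting (A \ B)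
  obtain ⟨s, hs⟩ := exists_intervalPartition_meeting (B \ A)
  have hdisj : Disjoint (meeting (A ∩ B))
      (Set.Iic (A ∩ B)ᶜ ∩ (meeting (A \ B) ∩ meeting (B \ A))) := by
    refine Set.disjoint_left.2 fun W hW hW' ↦ hW.ne_empty ?_
    exact disjoint_iff_inter_eq_empty.1 (subset_compl_iff_disjoint_right.1 hW'.1)
  rw [meeting_inter_meeting]
  refine ⟨p.disjUnion ((IntervalPartition.ofIic _).inter (q.inter s)) hdisj, fun W hW ↦ ?_⟩
  by_cases hWp : W ∈ meeting (A ∩ B)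
  · simp only [IntervalPartition.disjUnion, if_pos hWp]
    have := hp W hWp
    lia
  · have ⟨_, hWq, hWs⟩ := hW.resolve_left hWp
    simp only [IntervalPartition.disjUnion, if_neg hWp, IntervalPartition.inter,
      IntervalPartition.ofIic, inf_eq_inter, compl_inter]
    calc #((Aᶜ ∪ Bᶜ)ᶜ ∪ ((q.hi W)ᶜ ∪ (s.hi W)ᶜ))
        ≤ #(Aᶜ ∪ Bᶜ)ᶜ + (#(q.hi W)ᶜ + #(s.hi W)ᶜ) :=
          (card_union_le _ _).trans (by gcongr; exact card_union_le _ _)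
      _ ≤ #(A ∩ B) + (#(A \ B) / 2 + #(B \ A) / 2) := by
          rw [← compl_inter, compl_compl]
          gcongr
          exacts [hq W hWq, hs W hWs]
      _ = _ := (add_assoc _ _ _).symm

end Meeting

section RestrictSupport

variable {σ R : Type*} {ι : Sort*} [CommSemiring R]

theorem iSup_restrictSupport (S : ι → Set (σ →₀ ℕ)) :
    ⨆ i, restrictSupport R (S i) = restrictSupport R (⋃ i, S i) := by
  simp only [restrictSupport_eq_span, Set.image_iUnion, Submodule.span_iUnion]

theorem disjoint_restrictSupport {S T : Set (σ →₀ ℕ)} (h : Disjoint S T) :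
    Disjoint (restrictSupport R S) (restrictSupport R T) := by
  refine Submodule.disjoint_def.2 fun f hS hT ↦ ?_
  rw [mem_restrictSupport_iff] at hS hT
  rw [← support_eq_empty, ← Finset.coe_eq_empty]
  exact Set.subset_empty_iff.1 (h hS hT)

theorem iSupIndep_restrictSupport {ι : Type*} {S : ι → Set (σ →₀ ℕ)}
    (hS : Pairwise fun i j ↦ Disjoint (S i) (S j)) :
    iSupIndep fun i ↦ restrictSupport R (S i) := by
  intro i
  simp only [iSup_restrictSupport]
  exact disjoint_restrictSupport (Set.disjoint_iUnion₂_right.2 fun j hj ↦ hS hj.symm)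

end RestrictSupport

section SquarefreeExponent

variable {σ : Type*}

/-- The exponent of the squarefree monomial `∏ i ∈ A, X i`. -/
noncomputable def squarefreeExponent (A : Finset σ) : σ →₀ ℕ :=
  Finsupp.indicator A fun _ _ ↦ 1

theorem squarefreeExponent_apply [DecidableEq σ] (A : Finset σ) (i : σ) :
    squarefreeExponent A i = if i ∈ A then 1 else 0 := by
  simp [squarefreeExponent, Finsupp.indicator_apply]

theorem support_squarefreeExponent (A : Finset σ) : (squarefreeExponent A).support = A := by
  classical
  ext i
  simp [squarefreeExponent_apply]

end SquarefreeExponent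

section StanleyDepth

variable {n : ℕ} {K : Type*} [Field K]

theorem stanleySpace_squarefreeExponent {A B : Finset (Fin n)} (h : A ⊆ B) :
    stanleySpace K (squarefreeExponent A) B =
      restrictSupport K (Finsupp.support ⁻¹' Set.Icc A B) := by
  rw [restrictSupport_eq_span, stanleySpace]
  congr 1
  ext f
  constructor
  · rintro ⟨e, he, rfl⟩
    refine ⟨_, ⟨fun i hi ↦ ?_, fun i hi ↦ ?_⟩, rfl⟩
    · simp [squarefreeExponent_apply, hi]
    · by_cases hiA : i ∈ A
      · exact h hiA
      · exact he i (by simpa [squarefreeExponent_apply, hiA] using hi)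
  · rintro ⟨d, ⟨hAd, hdB⟩, rfl⟩
    have hle : squarefreeExponent A ≤ d := fun i ↦ by
      rw [squarefreeExponent_apply]
      split_ifs with hi
      exacts [Nat.one_le_iff_ne_zero.2 (Finsupp.mem_support_iff.1 (hAd hi)), Nat.zero_le _]
    refine ⟨d - squarefreeExponent A, fun i hi ↦ hdB ?_, by rw [add_tsub_cancel_of_le hle]⟩
    exact Finsupp.mem_support_iff.2 fun hd ↦ hi (by simp [hd])

theorem le_sdepth {I : Ideal (MvPolynomial (Fin n) K)} (hI : I ≠ ⊥) (D : StanleyDecomp K I) {k : ℕ}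
    (hk : ∀ i, k ≤ #(D.Z i)) : k ≤ sdepth I := by
  refine le_csSup ⟨n, ?_⟩ ⟨D, hk⟩
  rintro j ⟨E, hj⟩
  obtain hE | ⟨⟨i⟩⟩ := isEmpty_or_nonempty (Fin E.m)
  · have hbot := E.total
    rw [iSup_of_empty, eq_comm, Submodule.restrictScalars_eq_bot_iff] at hbot
    exact absurd hbot hI
  · exact (hj i).trans (card_finset_fin_le _)

section SquarefreeIdeal

variable {F : Set (Finset (Fin n))} {I : Ideal (MvPolynomial (Fin n) K)}

namespace IntervalPartition

/-- The Stanley decomposition of a squarefree monomial ideal, given by the family `F` of supports of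
its monomials, into the spaces `x_A K[hi A]` for the bottoms `A` of an interval partition of `F`. -/
noncomputable def stanleyDecomp (p : IntervalPartition F)
    (hI : I.restrictScalars K = restrictSupport K (Finsupp.support ⁻¹' F)) : StanleyDecomp K I :=
  let bottom : Fin (Nat.card p.bottoms) ≃ p.bottoms := (Finite.equivFin _).symm
  have space_eq (i) : stanleySpace K (squarefreeExponent (bottom i)) (p.hi (bottom i)) =
      restrictSupport K (Finsupp.support ⁻¹' Set.Icc ↑(bottom i) (p.hi (bottom i))) :=
    stanleySpace_squarefreeExponent (p.le_hi (bottom i).2.1)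
  { m := Nat.card p.bottoms
    u i := squarefreeExponent (bottom i)
    Z i := p.hi (bottom i)
    mem i := by
      rw [← Submodule.restrictScalars_mem K, hI, monomial_mem_restrictSupport, Set.mem_preimage,
        support_squarefreeExponent]
      exact .inl (bottom i).2.1
    indep := by
      simp only [space_eq]
      exact iSupIndep_restrictSupport fun i j hij ↦
        (p.pairwise_disjoint_Icc (bottom.injective.ne hij)).preimage _
    total := by
      simp only [space_eq]
      rw [iSup_restrictSupport, ← Set.preimage_iUnion, hI,
        bottom.surjective.iUnion_comp fun A ↦ Set.Icc (A : Finset (Fin n)) (p.hi A), p.iUnion_Icc] }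

end IntervalPartition

theorem le_sdepth_of_intervalPartition (hF : F.Nonempty)
    (hI : I.restrictScalars K = restrictSupport K (Finsupp.support ⁻¹' F))
    (p : IntervalPartition F) {k : ℕ} (hk : ∀ W ∈ F, k ≤ #(p.hi W)) : k ≤ sdepth I := by
  have hI_ne : I ≠ ⊥ := by
    obtain ⟨W, hW⟩ := hF
    have hmem : monomial (squarefreeExponent W) (1 : K) ∈ I := by
      rw [← Submodule.restrictScalars_mem K, hI, monomial_mem_restrictSupport, Set.mem_preimage,
        support_squarefreeExponent]
      exact .inl hW
    exact (Submodule.ne_bot_iff I).2 ⟨_, hmem, by simp⟩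
  exact le_sdepth hI_ne (p.stanleyDecomp hI) fun i ↦
    hk _ ((Finite.equivFin p.bottoms).symm i).2.1

end SquarefreeIdeal

theorem restrictScalars_varIdeal (A : Finset (Fin n)) :
    (varIdeal K A).restrictScalars K = restrictSupport K (Finsupp.support ⁻¹' meeting A) := by
  ext f
  rw [Submodule.restrictScalars_mem, varIdeal, mem_ideal_span_X_image, mem_restrictSupport_iff]
  refine forall₂_congr fun d _ ↦ ?_
  simp [meeting, Finset.Nonempty, and_comm]

theorem restrictScalars_varIdeal_inf (A B : Finset (Fin n)) :
    (varIdeal K A ⊓ varIdeal K B).restrictScalars K =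
      restrictSupport K (Finsupp.support ⁻¹' (meeting A ∩ meeting B)) := by
  ext f
  simp only [Submodule.restrictScalars_inf, restrictScalars_varIdeal, Submodule.mem_inf,
    mem_restrictSupport_iff, Set.preimage_inter, Set.subset_inter_iff]

theorem sdepth_overlapping_primes_general {A B : Finset (Fin n)} (hA : A.Nonempty)
    (hB : B.Nonempty) :
    (#(A \ B) + 1) / 2 + (#(B \ A) + 1) / 2 + #(A ∪ B)ᶜ ≤
      sdepth (varIdeal K A ⊓ varIdeal K B) := by
  obtain ⟨p, hp⟩ := exists_intervalPartition_meeting_inter A B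
  have univ_mem : univ ∈ meeting A ∩ meeting B := by
    simp [mem_meeting, hA, hB]
  refine le_sdepth_of_intervalPartition ⟨_, univ_mem⟩ (restrictScalars_varIdeal_inf A B) p
    fun W hW ↦ ?_
  have codim_le := hp W hW
  have card_union : #(A ∪ B) = #(A ∩ B) + #(A \ B) + #(B \ A) := by
    have := card_union_add_card_inter A B
    have := card_inter_add_card_sdiff A B
    have := card_inter_add_card_sdiff B A
    rw [inter_comm B A] at this
    lia
  have := card_add_card_compl (p.hi W)
  have := card_add_card_compl (A ∪ B)
  lia

end StanleyDepth

theorem card_filter_lt_sdiff_filter_le {n r t : ℕ} (hrt : r ≤ t) (hrn : r ≤ n) :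
    #((univ.filter fun i : Fin n ↦ (i : ℕ) < t) \ univ.filter fun i ↦ r ≤ (i : ℕ)) = r := by
  have sdiff_eq : ((univ.filter fun i : Fin n ↦ (i : ℕ) < t) \ univ.filter fun i ↦ r ≤ (i : ℕ)) =
      univ.filter fun i : Fin n ↦ (i : ℕ) < r := by
    ext i
    simp only [mem_sdiff, mem_filter_univ]
    lia
  rw [sdiff_eq, Fin.card_filter_val_lt, min_eq_right hrn]

theorem card_filter_le_sdiff_filter_lt {n r t : ℕ} (hrt : r ≤ t) :
    #((univ.filter fun i : Fin n ↦ r ≤ (i : ℕ)) \ univ.filter fun i ↦ (i : ℕ) < t) = n - t := by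
  have sdiff_eq : ((univ.filter fun i : Fin n ↦ r ≤ (i : ℕ)) \ univ.filter fun i ↦ (i : ℕ) < t) =
      (univ.filter fun i : Fin n ↦ (i : ℕ) < t)ᶜ := by
    ext i
    simp only [mem_sdiff, mem_compl, mem_filter_univ]
    lia
  rw [sdiff_eq, card_compl, Fin.card_filter_val_lt, Fintype.card_fin]
  lia

/-- for `Q = (x₁,…,x_t)` and `Q' = (x_{r+1},…,xₙ)` with
`1 ≤ r ≤ t < n`, `sdepth (Q ∩ Q') ≥ ⌈r/2⌉ + ⌈(n−t)/2⌉`. -/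
theorem sdepth_overlapping_primes {K : Type*} [Field K] (n r t : ℕ)
    (h1 : 1 ≤ r) (h2 : r ≤ t) (h3 : t < n) :
    sdepth
      ((varIdeal K (Finset.univ.filter fun i : Fin n => (i : ℕ) < t)) ⊓
        (varIdeal K (Finset.univ.filter fun i : Fin n => r ≤ (i : ℕ)))) ≥
      (r + 1) / 2 + (n - t + 1) / 2 := by
  have h := sdepth_overlapping_primes_general (K := K)
    (A := univ.filter fun i : Fin n ↦ (i : ℕ) < t) (B := univ.filter fun i : Fin n ↦ r ≤ (i : ℕ))
    ⟨⟨0, by lia⟩, mem_filter_univ _ |>.2 (h1.trans h2)⟩ ⟨⟨t, h3⟩, mem_filter_univ _ |>.2 h2⟩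
  rw [card_filter_lt_sdiff_filter_le h2 (h2.trans h3.le), card_filter_le_sdiff_filter_lt h2] at h
  exact (Nat.le_add_right _ _).trans h
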